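/- The causaltope of the switch order in which party A's input controls the causal order of parties B and C — the set of three-party empirical models p : ({0,1}³) → ({0,1}³ → ℝ) satisfying (i) ∑_{o_B,o_C} p i o depends only on i_A (for each o_A), (ii) for inputs with i_A = 0, ∑_{o_C} p i o is independent of i_C (for each (o_A,o_B) and each i_B), and (iii) for inputs with i_A = 1, ∑_{o_B} p i o is independent of i_B (for each (o_A,o_C) and each i_C) — has affine dimension 42. -/

import Mathlib

/-- The causaltope of the switch order where party `A`'s input controls the causal order
of parties `B` and `C` (binary inputs and outputs): empirical models `p` (nonnegative,
normalised) such that (i) the marginal of `o_A` depends only on `i_A`; (ii) when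
`i_A = 0` (so `B ≺ C`), the joint marginal of `(o_A, o_B)` is independent of `i_C`;
(iii) when `i_A = 1` (so `C ≺ B`), the joint marginal of `(o_A, o_C)` is independent
of `i_B`. -/
def causaltopeSwitch : Set ((Bool × Bool × Bool) → (Bool × Bool × Bool) → ℝ) :=
  {p | (∀ i o, 0 ≤ p i o) ∧ (∀ i, ∑ o : Bool × Bool × Bool, p i o = 1) ∧
    (∀ a b c b' c' oA : Bool,
      ∑ oB : Bool, ∑ oC : Bool, p (a, b, c) (oA, oB, oC)
        = ∑ oB : Bool, ∑ oC : Bool, p (a, b', c') (oA, oB, oC)) ∧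
    (∀ b c c' oA oB : Bool,
      ∑ oC : Bool, p (false, b, c) (oA, oB, oC)
        = ∑ oC : Bool, p (false, b, c') (oA, oB, oC)) ∧
    (∀ b b' c oA oC : Bool,
      ∑ oB : Bool, p (true, b, c) (oA, oB, oC)
        = ∑ oB : Bool, p (true, b', c) (oA, oB, oC))}

/-!
After reindexing events by the order in which the parties act, the switch order becomes a total
order: `A` first, then the two others in the order selected by `A`'s input. For a total order the
homogeneous constraints are built one party at a time: the marginal over the last output does not
depend on the last input and satisfies the constraints for the earlier parties. Adding a party
with inputs `I` and outputs `O` after histories in `H` hence adds `|H| |I| (|O| - 1)` dimensions,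
the kernel of marginalisation, and the total is `2 * 1 + (4 * 2) * 1 + (16 * 2) * 1 = 42`.
Nonnegativity does not lower the dimension, since the uniform model has positive coordinates.
-/

open Module Filter Topology

theorem finrank_comap_of_surjective {K V W : Type*} [DivisionRing K] [AddCommGroup V] [Module K V]
    [AddCommGroup W] [Module K W] [FiniteDimensional K V] {f : V →ₗ[K] W}
    (hf : Function.Surjective f) (S : Submodule K W) :
    finrank K (S.comap f) = finrank K S + finrank K (LinearMap.ker f) := by
  rw [← (f.domRestrict (S.comap f)).finrank_range_add_finrank_ker, LinearMap.range_domRestrict,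
    Submodule.map_comap_eq_of_surjective hf, LinearMap.ker_domRestrict,
    (Submodule.comapSubtypeEquivOfLe (LinearMap.ker_le_comap f)).finrank_eq]

theorem vectorSpan_inter_of_mem_nhds {𝕜 V P : Type*} [NontriviallyNormedField 𝕜]
    [AddCommGroup V] [Module 𝕜 V] [TopologicalSpace V] [ContinuousSMul 𝕜 V]
    [AddTorsor V P] [TopologicalSpace P] [ContinuousVAdd V P]
    (A : AffineSubspace 𝕜 P) {U : Set P} {p : P} (hpA : p ∈ A) (hU : U ∈ 𝓝 p) :
    vectorSpan 𝕜 (A ∩ U) = A.direction := by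
  refine le_antisymm ?_ fun v hv => ?_
  · rw [A.direction_eq_vectorSpan]
    exact vectorSpan_mono 𝕜 Set.inter_subset_left
  · have hline : Tendsto (fun t : 𝕜 => t • v +ᵥ p) (𝓝[≠] 0) (𝓝 p) := by
      have : Continuous fun t : 𝕜 => t • v +ᵥ p := by fun_prop
      simpa using (this.tendsto 0).mono_left nhdsWithin_le_nhds
    obtain ⟨t, htU, ht⟩ := ((hline.eventually hU).and self_mem_nhdsWithin).exists
    have htA : t • v +ᵥ p ∈ A :=
      A.vadd_mem_of_mem_direction (A.direction.smul_mem t hv) hpA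
    have htv : t • v ∈ vectorSpan 𝕜 (A ∩ U) := by
      simpa using vsub_mem_vectorSpan 𝕜 (Set.mem_inter htA htU)
        (Set.mem_inter hpA (mem_of_mem_nhds hU))
    exact (Submodule.smul_mem_iff _ ht).mp htv

theorem setOf_nonneg_mem_nhds {ι κ R : Type*} [Finite ι] [Finite κ] [Zero R] [LinearOrder R]
    [TopologicalSpace R] [ClosedIicTopology R] {p : ι → κ → R} (hp : ∀ i j, 0 < p i j) :
    {q : ι → κ → R | ∀ i j, 0 ≤ q i j} ∈ 𝓝 p := by
  refine eventually_all.mpr fun i => eventually_all.mpr fun j => ?_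
  have hcont : Continuous fun q : ι → κ → R => q i j := by fun_prop
  exact hcont.tendsto p (Ici_mem_nhds (hp i j))

section CausalExtension

variable (R : Type*) [Semiring R] (K : Type*) [DivisionRing K]
  (X : Type*) {H : Type*} (I O : Type*) [Fintype O]

/-- Marginalisation over an outcome in `O`, for functions of a context in `X` and that outcome. -/
def marginal : (X × O → R) →ₗ[R] (X → R) where
  toFun v x := ∑ o, v (x, o)
  map_add' _ _ := funext fun _ => Finset.sum_add_distrib
  map_smul' _ _ := funext fun _ => (Finset.mul_sum _ _ _).symm

variable {R X O} in
@[simp]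
theorem marginal_apply (v : X × O → R) (x : X) : marginal R X O v x = ∑ o, v (x, o) := rfl

theorem marginal_surjective [Nonempty O] : Function.Surjective (marginal R X O) := by
  classical
  obtain ⟨o₀⟩ := ‹Nonempty O›
  exact fun w => ⟨fun y => Pi.single (M := fun _ => R) o₀ (w y.1) y.2, by ext; simp⟩

theorem finrank_ker_marginal [Fintype X] [Nonempty O] :
    finrank K (LinearMap.ker (marginal K X O)) = Fintype.card X * (Fintype.card O - 1) := by
  have h := (marginal K X O).finrank_range_add_finrank_ker
  rw [LinearMap.range_eq_top.mpr (marginal_surjective K X O), finrank_top,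
    finrank_fintype_fun_eq_card, finrank_fintype_fun_eq_card, Fintype.card_prod] at h
  rw [Nat.mul_sub_one]
  lia

variable {R K}

/-- Given a space `S` of functions of the past `H`, the functions of the past, of an input in `I`
and of an output in `O` whose sum over the output does not depend on the input and lies in `S`:
the linear conditions for a party with input `I` and output `O` to act after `H`. -/
def causalExtension (S : Submodule R (H → R)) : Submodule R ((H × I) × O → R) :=
  (S.map (LinearMap.funLeft R R Prod.fst)).comap (marginal R (H × I) O)

variable {I O} in
theorem mem_causalExtension_iff (i₀ : I) {S : Submodule R (H → R)} {v : (H × I) × O → R} :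
    v ∈ causalExtension I O S ↔
      (∀ h i j, ∑ o, v ((h, i), o) = ∑ o, v ((h, j), o)) ∧ (fun h => ∑ o, v ((h, i₀), o)) ∈ S := by
  constructor
  · rintro ⟨w, hw, hwv⟩
    have hsum (h i) : ∑ o, v ((h, i), o) = w h := (congrFun hwv (h, i)).symm
    exact ⟨fun h i j => (hsum h i).trans (hsum h j).symm, (funext (hsum · i₀)).symm ▸ hw⟩
  · rintro ⟨hconst, hS⟩
    exact ⟨_, hS, funext fun x => hconst x.1 i₀ x.2⟩

theorem finrank_causalExtension [Fintype H] [Fintype I] [Nonempty I] [Nonempty O]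
    (S : Submodule K (H → K)) :
    finrank K (causalExtension I O S)
      = finrank K S + Fintype.card H * Fintype.card I * (Fintype.card O - 1) := by
  have hconst : Function.Injective (LinearMap.funLeft K K (Prod.fst : H × I → H)) :=
    LinearMap.funLeft_injective_of_surjective K K _ Prod.fst_surjective
  rw [causalExtension, finrank_comap_of_surjective (marginal_surjective K _ O),
    finrank_ker_marginal, ← (Submodule.equivMapOfInjective _ hconst S).finrank_eq,
    Fintype.card_prod]

end CausalExtension

section Switch

/-- The events `(i, o)` listed in the order in which the parties act,
`(((((i_A, o_A), i₂), o₂), i₃), o₃)`: the second and third parties are `B, C` when `i_A = 0` and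
`C, B` when `i_A = 1`. -/
def switchEvent :
    ((((Bool × Bool) × Bool) × Bool) × Bool) × Bool ≃ (Bool × Bool × Bool) × (Bool × Bool × Bool)
    where
  toFun
    | (((((false, oA), b), oB), c), oC) => ((false, b, c), (oA, oB, oC))
    | (((((true, oA), c), oC), b), oB) => ((true, b, c), (oA, oB, oC))
  invFun
    | ((false, b, c), (oA, oB, oC)) => (((((false, oA), b), oB), c), oC)
    | ((true, b, c), (oA, oB, oC)) => (((((true, oA), c), oC), b), oB)
  left_inv := by rintro ⟨⟨⟨⟨⟨_ | _, _⟩, _⟩, _⟩, _⟩, _⟩ <;> rfl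
  right_inv := by rintro ⟨⟨_ | _, _, _⟩, _, _, _⟩ <;> rfl

/-- Functions of inputs and outputs rewritten as functions of the history in order of action. -/
noncomputable def switchReindex : ((Bool × Bool × Bool) → (Bool × Bool × Bool) → ℝ) ≃ₗ[ℝ]
    (((((Bool × Bool) × Bool) × Bool) × Bool) × Bool → ℝ) :=
  (LinearEquiv.curry ℝ ℝ _ _).symm ≪≫ₗ LinearEquiv.funCongrLeft ℝ ℝ switchEvent

/-- The directions along which the switch constraints are preserved. After reindexing these are
the conditions for three successive parties, `A` being the first. -/
noncomputable def switchDirection : Submodule ℝ ((Bool × Bool × Bool) → (Bool × Bool × Bool) → ℝ) :=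
  (causalExtension Bool Bool (causalExtension Bool Bool
    (LinearMap.ker (marginal ℝ Bool Bool)))).comap switchReindex.toLinearMap

theorem sum_switchReindex (v : (Bool × Bool × Bool) → (Bool × Bool × Bool) → ℝ)
    (a oA i j : Bool) :
    ∑ o, ∑ o', switchReindex v (((((a, oA), i), o), j), o')
      = ∑ oB, ∑ oC, v (a, bif a then j else i, bif a then i else j) (oA, oB, oC) := by
  cases a
  · rfl
  · exact Finset.sum_comm

theorem finrank_switchDirection : finrank ℝ switchDirection = 42 := by
  rw [switchDirection, finrank_comap_of_surjective switchReindex.surjective,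
    LinearEquiv.ker, finrank_bot, finrank_causalExtension, finrank_causalExtension,
    finrank_ker_marginal]
  simp only [Fintype.card_prod, Fintype.card_bool]

theorem mem_switchDirection_iff {v : (Bool × Bool × Bool) → (Bool × Bool × Bool) → ℝ} :
    v ∈ switchDirection ↔
      (∀ i, ∑ o, v i o = 0) ∧
      (∀ a b c b' c' oA, ∑ oB, ∑ oC, v (a, b, c) (oA, oB, oC)
        = ∑ oB, ∑ oC, v (a, b', c') (oA, oB, oC)) ∧
      (∀ b c c' oA oB, ∑ oC, v (false, b, c) (oA, oB, oC)
        = ∑ oC, v (false, b, c') (oA, oB, oC)) ∧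
      (∀ b b' c oA oC, ∑ oB, v (true, b, c) (oA, oB, oC)
        = ∑ oB, v (true, b', c) (oA, oB, oC)) := by
  rw [switchDirection, Submodule.mem_comap, mem_causalExtension_iff false,
    mem_causalExtension_iff false, LinearMap.mem_ker, funext_iff]
  simp only [LinearEquiv.coe_coe, Pi.zero_apply, marginal_apply]
  constructor
  · rintro ⟨hlast, hmid, hfirst⟩
    have hpair (a oA i j i' j') :
        ∑ o, ∑ o', switchReindex v (((((a, oA), i), o), j), o')
          = ∑ o, ∑ o', switchReindex v (((((a, oA), i'), o), j'), o') :=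
      calc
        _ = ∑ o, ∑ o', switchReindex v (((((a, oA), i), o), false), o') :=
          Finset.sum_congr rfl fun _ _ => hlast _ _ _
        _ = ∑ o, ∑ o', switchReindex v (((((a, oA), i'), o), false), o') := hmid _ _ _
        _ = _ := Finset.sum_congr rfl fun _ _ => hlast _ _ _
    simp only [sum_switchReindex, Bool.cond_self] at hpair hfirst
    have hA (a b c b' c' oA) : ∑ oB, ∑ oC, v (a, b, c) (oA, oB, oC)
        = ∑ oB, ∑ oC, v (a, b', c') (oA, oB, oC) := by
      cases a
      · exact hpair false oA b c b' c'
      · exact hpair true oA c b c' b'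
    refine ⟨fun ⟨a, b, c⟩ => ?_, hA, fun b c c' oA oB => hlast (((false, oA), b), oB) c c',
      fun b b' c oA oC => hlast (((true, oA), c), oC) b b'⟩
    simp only [Fintype.sum_prod_type, hA a b c false false, hfirst]
  · rintro ⟨hnorm, hA, hC, hB⟩
    simp only [sum_switchReindex, Bool.cond_self]
    refine ⟨?_, fun ⟨a, oA⟩ i i' => hA a _ _ _ _ oA, fun a => ?_⟩
    · rintro ⟨⟨⟨_ | _, oA⟩, i⟩, o⟩ j j'
      · exact hC i j j' oA o
      · exact hB j j' i oA o
    · simpa only [Fintype.sum_prod_type] using hnorm (a, false, false)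

/-- The uniform empirical model, a point of the causaltope with positive coordinates. -/
noncomputable def uniformModel : (Bool × Bool × Bool) → (Bool × Bool × Bool) → ℝ :=
  fun _ _ => 1 / 8

theorem causaltopeSwitch_eq_inter_nonneg :
    causaltopeSwitch =
      (AffineSubspace.mk' uniformModel switchDirection : Set _) ∩ {p | ∀ i o, 0 ≤ p i o} := by
  ext p
  rw [Set.mem_inter_iff, SetLike.mem_coe, AffineSubspace.mem_mk', vsub_eq_sub,
    mem_switchDirection_iff]
  have huniform (i) : ∑ o, uniformModel i o = 1 := by
    norm_num [uniformModel]
  simp only [Pi.sub_apply, Finset.sum_sub_distrib, huniform, sub_eq_zero]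
  simp only [uniformModel, sub_left_inj]
  exact and_comm

end Switch

/-- The causaltope of the switch order in which `A`'s input controls the
causal order of `B` and `C` has affine dimension 42. -/
theorem causaltopeSwitch_affineDim :
    Module.finrank ℝ (vectorSpan ℝ causaltopeSwitch) = 42 := by
  rw [causaltopeSwitch_eq_inter_nonneg,
    vectorSpan_inter_of_mem_nhds _ (AffineSubspace.self_mem_mk' _ _)
      (setOf_nonneg_mem_nhds fun _ _ => by norm_num [uniformModel]),
    AffineSubspace.direction_mk', finrank_switchDirection]
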